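/- Let n and k be integers with n ≥ 3 and 2 ≤ k ≤ n−1. For every r > 0 and every φ ∈ [0,π/2], (2n−k−2)·(1/2) tanh(r/2) + (k−2)·(1/2) coth(r/2) + tr(M'(r,φ) M(r,φ)^{-1}) = (k − 1 + 2n sinh²(r/2)) / (2 sinh(r/2) cosh(r/2)). In particular this quantity (the mean curvature of the tube of radius r around W_w at a point reached along a unit normal of Kähler angle φ) does not depend on φ, so the tubes around W_w have constant mean curvature and form an isoparametric family. -/

import Mathlib

/- Context: `M(t,φ)` is the 3×3 block, corresponding to the vectors `Z, P̄ξ, F̄ξ`,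
of the endomorphism `D(t)` built from Jacobi fields along a geodesic normal to the
submanifold `W_w` of codimension `k` in `ℂH^n`, for a unit normal `ξ` of Kähler
angle `φ`. The shape operator of the tube of radius `r` around `W_w` at a point
reached along `ξ` is block diagonal with eigenvalue `(1/2)tanh(r/2)` of
multiplicity `2n−k−2`, eigenvalue `(1/2)coth(r/2)` of multiplicity `k−2`, and the
3×3 block `M'(r,φ) M(r,φ)⁻¹`; its trace is the mean curvature of the tube. -/

open Real

noncomputable section

/-- The 3×3 block `M(t,φ)` (in the basis `Z, P̄ξ, F̄ξ`) of the endomorphism `D(t)`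
built from Jacobi fields along a geodesic normal to `W_w` in `ℂH^n`, for a unit
normal `ξ` of Kähler angle `φ`; the columns are the Jacobi fields `ζ_Z`,
`ζ_{P̄ξ}`, `ζ_{F̄ξ}`. -/
def M (t φ : ℝ) : Matrix (Fin 3) (Fin 3) ℝ :=
  Matrix.of
    ![![cosh (t / 2),
        -(sin φ * sinh (t / 2)),
        0],
      ![-(sin φ * (cos φ ^ 2 + sin φ ^ 2 * cosh (t / 2)) * sinh (t / 2)),
        cos φ ^ 2 * cosh (t / 2) + sin φ ^ 2 * cosh t,
        2 * sin φ * cos φ * (cosh (t / 2) - 1) * sinh (t / 2)],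
      ![-(cos φ * sin φ ^ 2 * (cosh (t / 2) - 1) * sinh (t / 2)),
        -(sin φ * cos φ * (cosh (t / 2) - cosh t)),
        2 * (1 + cos φ ^ 2 * (cosh (t / 2) - 1)) * sinh (t / 2)]]

/-- The entrywise derivative `M'(r,φ)` of `M` with respect to the first variable. -/
def M' (r φ : ℝ) : Matrix (Fin 3) (Fin 3) ℝ :=
  Matrix.of fun i j => deriv (fun t => M t φ i j) r

/-! For an invertible matrix function, `tr (A' A⁻¹)` is the logarithmic derivative of `det A`
(Jacobi's formula), so the claim only involves `det (M t φ)`. Rotating the plane spanned by `P̄ξ`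
and `F̄ξ` so that one axis becomes `Jξ = sin φ P̄ξ + cos φ F̄ξ` shows that the Kähler angle drops
out: `det (M t φ) = 2 cosh³(t/2) sinh(t/2)`. Its logarithmic derivative is
`(3/2) tanh(t/2) + (1/2) coth(t/2)`, and adding the remaining eigenvalues gives the mean
curvature. -/

section JacobiFormula

variable {m : Type*} [Fintype m] [DecidableEq m]

theorem trace_mul_adjugate_eq_sum_det_updateRow {R : Type*} [CommRing R] (A B : Matrix m m R) :
    Matrix.trace (B * A.adjugate) = ∑ i, (A.updateRow i (B i)).det := by
  refine Finset.sum_congr rfl fun i _ => ?_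
  rw [← Matrix.cramer_transpose_apply, Matrix.cramer_eq_adjugate_mulVec,
    ← Matrix.adjugate_transpose, Matrix.mulVec_transpose]
  rfl

variable {𝕜 : Type*} [NontriviallyNormedField 𝕜] {x : 𝕜}

theorem hasDerivAt_det {𝔸 : Type*} [NormedCommRing 𝔸] [NormedAlgebra 𝕜 𝔸]
    {A : 𝕜 → Matrix m m 𝔸} {A' : Matrix m m 𝔸}
    (hA : ∀ i j, HasDerivAt (fun t => A t i j) (A' i j) x) :
    HasDerivAt (fun t => (A t).det) (Matrix.trace (A' * (A x).adjugate)) x := by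
  let det : ContinuousMultilinearMap 𝕜 (fun _ : m => m → 𝔸) 𝔸 :=
    { Matrix.detRowAlternating.toMultilinearMap.restrictScalars 𝕜 with
      cont := continuous_id.matrix_det }
  have hA' : HasDerivAt (fun t i => A t i) (fun i => A' i) x :=
    hasDerivAt_pi.2 fun i => hasDerivAt_pi.2 (hA i)
  refine ((det.hasFDerivAt (A x)).comp_hasDerivAt x hA').congr_deriv ?_
  rw [trace_mul_adjugate_eq_sum_det_updateRow]
  exact det.linearDeriv_apply (A x) A'

theorem trace_mul_inv_eq_logDeriv_det {𝕜' : Type*} [NontriviallyNormedField 𝕜']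
    [NormedAlgebra 𝕜 𝕜'] {A : 𝕜 → Matrix m m 𝕜'} {A' : Matrix m m 𝕜'}
    (hA : ∀ i j, HasDerivAt (fun t => A t i j) (A' i j) x) :
    Matrix.trace (A' * (A x)⁻¹) = logDeriv (fun t => (A t).det) x := by
  rw [logDeriv_apply, (hasDerivAt_det hA).deriv, Matrix.inv_def, Ring.inverse_eq_inv',
    Matrix.mul_smul, Matrix.trace_smul, smul_eq_mul, div_eq_inv_mul]

end JacobiFormula

theorem logDeriv_comp_div_const {𝕜 𝕜' : Type*} [NontriviallyNormedField 𝕜]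
    [NontriviallyNormedField 𝕜'] [NormedAlgebra 𝕜 𝕜'] (f : 𝕜 → 𝕜') (c x : 𝕜) :
    logDeriv (fun t => f (t / c)) x = c⁻¹ • logDeriv f (x / c) := by
  simp only [logDeriv_apply, div_eq_inv_mul _ c, deriv_comp_mul_left, smul_div_assoc]

/-- The change of orthonormal basis from `Z, P̄ξ, F̄ξ` to `Z, cos φ P̄ξ - sin φ F̄ξ, Jξ`, where
`Jξ = sin φ P̄ξ + cos φ F̄ξ`; it acts on coordinate columns from the left. -/
def kaehlerRotation (φ : ℝ) : Matrix (Fin 3) (Fin 3) ℝ :=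
  !![1, 0, 0; 0, cos φ, -sin φ; 0, sin φ, cos φ]

theorem det_kaehlerRotation (φ : ℝ) : (kaehlerRotation φ).det = 1 := by
  simp [kaehlerRotation, Matrix.det_fin_three, ← sq]

theorem kaehlerRotation_mul_M (t φ : ℝ) :
    kaehlerRotation φ * M t φ =
      !![cosh (t / 2), -(sin φ * sinh (t / 2)), 0;
        -(sin φ * cos φ * sinh (t / 2)), cos φ * cosh (t / 2), -(2 * sin φ * sinh (t / 2));
        -(sin φ ^ 2 * sinh (t / 2) * cosh (t / 2)), sin φ * cosh t,
          2 * cos φ * sinh (t / 2) * cosh (t / 2)] := by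
  have hφ := sin_sq_add_cos_sq φ
  ext i j
  fin_cases i <;> fin_cases j <;>
    simp only [kaehlerRotation, M, Matrix.mul_apply, Fin.sum_univ_three, Matrix.of_apply,
      Fin.zero_eta, Fin.mk_one, Fin.reduceFinMk, Matrix.cons_val] <;> grind

theorem det_M (t φ : ℝ) : (M t φ).det = 2 * cosh (t / 2) ^ 3 * sinh (t / 2) := by
  have hφ := sin_sq_add_cos_sq φ
  have ht : cosh t = cosh (t / 2) ^ 2 + sinh (t / 2) ^ 2 := by
    rw [← cosh_two_mul, mul_div_cancel₀ t two_ne_zero]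
  calc (M t φ).det = (kaehlerRotation φ * M t φ).det := by
        rw [Matrix.det_mul, det_kaehlerRotation, one_mul]
    _ = 2 * cosh (t / 2) * sinh (t / 2)
          * (cos φ ^ 2 * cosh (t / 2) ^ 2 + sin φ ^ 2 * (cosh t - sinh (t / 2) ^ 2)) := by
        simp only [kaehlerRotation_mul_M, Matrix.det_fin_three, Matrix.of_apply, Matrix.cons_val]
        linear_combination -(2 * cosh (t / 2) * sinh (t / 2) ^ 3 * sin φ ^ 2) * hφ
    _ = 2 * cosh (t / 2) * sinh (t / 2) * ((sin φ ^ 2 + cos φ ^ 2) * cosh (t / 2) ^ 2) := by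
        rw [ht]
        ring
    _ = 2 * cosh (t / 2) ^ 3 * sinh (t / 2) := by
        rw [hφ]
        ring

theorem hasDerivAt_M (r φ : ℝ) (i j : Fin 3) :
    HasDerivAt (fun t => M t φ i j) (M' r φ i j) r := by
  refine DifferentiableAt.hasDerivAt ?_
  fin_cases i <;> fin_cases j <;>
    simp only [M, Matrix.of_apply, Fin.zero_eta, Fin.mk_one, Fin.reduceFinMk, Matrix.cons_val] <;>
    fun_prop

theorem trace_M'_mul_inv_M {r : ℝ} (hr : r ≠ 0) (φ : ℝ) :
    Matrix.trace (M' r φ * (M r φ)⁻¹)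
      = 3 / 2 * tanh (r / 2) + 2⁻¹ * (cosh (r / 2) / sinh (r / 2)) := by
  have hs : sinh (r / 2) ≠ 0 := sinh_ne_zero.2 (by positivity)
  rw [trace_mul_inv_eq_logDeriv_det (hasDerivAt_M r φ)]
  simp only [det_M]
  rw [logDeriv_mul r (by positivity) hs (by fun_prop) (by fun_prop),
    logDeriv_const_mul r 2 two_ne_zero, logDeriv_fun_pow (by fun_prop),
    logDeriv_comp_div_const cosh, logDeriv_comp_div_const sinh, Real.logDeriv_cosh,
    logDeriv_apply sinh, Real.deriv_sinh, smul_eq_mul, smul_eq_mul]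
  push_cast
  ring

theorem mean_curvature_tube_general (n k : ℝ) {r : ℝ} (hr : r ≠ 0) (φ : ℝ) :
    (2 * n - k - 2) * (2⁻¹ * tanh (r / 2))
        + (k - 2) * (2⁻¹ * (cosh (r / 2) / sinh (r / 2)))
        + Matrix.trace (M' r φ * (M r φ)⁻¹)
      = (k - 1 + 2 * n * sinh (r / 2) ^ 2) / (2 * sinh (r / 2) * cosh (r / 2)) := by
  have hs : sinh (r / 2) ≠ 0 := sinh_ne_zero.2 (by positivity)
  have hc : cosh (r / 2) ≠ 0 := (cosh_pos _).ne'
  rw [trace_M'_mul_inv_M hr, tanh_eq_sinh_div_cosh]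
  field_simp
  linear_combination (k - 1) * cosh_sq (r / 2)

/-- for integers `n ≥ 3`, `2 ≤ k ≤ n−1`, every `r > 0` and every
`φ ∈ [0,π/2]`,
`(2n−k−2)·(1/2)tanh(r/2) + (k−2)·(1/2)coth(r/2) + tr(M'(r,φ) M(r,φ)⁻¹)
  = (k − 1 + 2n sinh²(r/2)) / (2 sinh(r/2) cosh(r/2))`.
In particular the mean curvature of the tube of radius `r` around `W_w` does not
depend on `φ`, so the tubes around `W_w` have constant mean curvature and form an
isoparametric family. -/
theorem mean_curvature_tube (n k : ℕ) (hn : 3 ≤ n) (hk : 2 ≤ k) (hk' : k ≤ n - 1)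
    (r : ℝ) (hr : 0 < r) (φ : ℝ) (hφ : φ ∈ Set.Icc 0 (π / 2)) :
    (2 * (n : ℝ) - k - 2) * (2⁻¹ * tanh (r / 2))
        + ((k : ℝ) - 2) * (2⁻¹ * (cosh (r / 2) / sinh (r / 2)))
        + Matrix.trace (M' r φ * (M r φ)⁻¹)
      = ((k : ℝ) - 1 + 2 * n * sinh (r / 2) ^ 2)
          / (2 * sinh (r / 2) * cosh (r / 2)) := mean_curvature_tube_general n k hr.ne' φ
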